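/- Let d ≥ 1, k ≥ 2, and m ≥ k be integers with m > d. Every (k,m)-agreeable ℝ^d-convex society has agreement proportion at least 1 - (1 - C(k,d+1)/C(m,d+1))^{1/(d+1)}. Precisely: if V is a finite set of n ≥ m voters with convex approval sets A_v ⊆ ℝ^d such that every m-element subset of V includes k voters whose approval sets have a common point, then there exists a point of ℝ^d contained in at least (1 - (1 - C(k,d+1)/C(m,d+1))^{1/(d+1)}) · n of the sets A_v, where C(a,b) denotes the binomial coefficient. -/

import Mathlib

open scoped Nat

/-!
Put `c = C(k, d+1) / C(m, d+1)`. Every `m` voters contain `k` with a common point, so double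
counting shows that at least a fraction `c` of the `(d+1)`-subsets of voters have a common point.
If every point misses at least `x` of the `n` sets, then conversely at least `C(x+d, d+1)` of the
`(d+1)`-subsets have no common point (the upper bound theorem of Kalai and Eckhoff).
Hence `x^(d+1) / (d+1)! ≤ C(x+d, d+1) ≤ (1 - c) C(n, d+1) ≤ (1 - c) n^(d+1) / (d+1)!`.

For the upper bound theorem, shrink the sets to polytopes and let `p_S` be the point of smallest
norm of the intersection of a `(d+1)`-subset `S`. By Helly's theorem some `a ∈ S` can be dropped
without changing this point. For each of the at least `x` voters `v` whose set misses `p_S`,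
exchanging `a` for `v` yields a subset that has empty intersection or a minimum of larger norm.
Processing the subsets by decreasing minimal norm, one therefore generates all of them from those
with empty intersection, each time using a star with `x` leaves. Now assign to the voters vectors
in general position in `K^(x+d)`: the wedge product along `S` is a linear combination of the wedge
products along the leaves of its star, so the subsets with empty intersection provide a spanning
family of `⋀^(d+1) K^(x+d)`, whose dimension is `C(x+d, d+1)`.
-/

open Finset Module Submodule

section WeakSaturation

/-- Weak saturation of hypergraphs by stars: the sets obtained from those in `G` by repeatedly
adding `insert a I` once `insert v I` is present for at least `N - #I` elements `v ∉ I`. The bound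
on the number of these elements, which form the set `Z`, is written without subtraction. -/
inductive StarGenerated {α : Type*} [DecidableEq α] (N : ℕ) (G : Set (Finset α)) : Finset α → Prop
  | mem {S : Finset α} : S ∈ G → StarGenerated N G S
  | star {I Z : Finset α} {a : α} : a ∉ I → Disjoint Z I → N ≤ #Z + #I →
      (∀ v ∈ Z, StarGenerated N G (insert v I)) → StarGenerated N G (insert a I)

theorem starGenerated_of_forall_exists_star {α β : Type*} [DecidableEq α] [LinearOrder β] {N : ℕ}
    {F : Finset (Finset α)} {G : Set (Finset α)} {f : Finset α → β}
    (hstar : ∀ S ∈ F, ∃ a ∈ S, ∃ Z, Disjoint Z (S.erase a) ∧ N ≤ #Z + #(S.erase a) ∧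
      ∀ v ∈ Z, insert v (S.erase a) ∈ G ∨
        insert v (S.erase a) ∈ F ∧ f S < f (insert v (S.erase a)))
    {S : Finset α} (hS : S ∈ F) : StarGenerated N G S := by
  classical
  by_contra hSG
  obtain ⟨S, hSF, hmax⟩ := exists_max_image {S ∈ F | ¬ StarGenerated N G S} f
    ⟨S, mem_filter.mpr ⟨hS, hSG⟩⟩
  simp only [mem_filter] at hSF hmax
  obtain ⟨a, haS, Z, hZ, hN, hleaf⟩ := hstar S hSF.1
  refine hSF.2 ?_
  rw [← insert_erase haS]
  refine .star (notMem_erase a S) hZ hN fun v hv ↦ ?_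
  by_contra hvG
  rcases hleaf v hv with hmem | ⟨hmem, hlt⟩
  · exact hvG (.mem hmem)
  · exact (hmax _ ⟨hmem, hvG⟩).not_gt hlt

theorem range_update_eq_insert {α ι : Type*} [DecidableEq ι] {t : ι → α}
    (ht : Function.Injective t) (i : ι) (v : α) :
    Set.range (Function.update t i v) = insert v (Set.range t \ {t i}) := by
  rw [← Set.image_univ, ← Set.insert_sdiff_self_of_mem (Set.mem_univ i), Set.image_insert_eq,
    Function.update_self, Set.image_congr (g := t), Set.image_sdiff ht, Set.image_univ,
    Set.image_singleton]
  exact fun j hj ↦ Function.update_of_ne hj.2 _ _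

variable {R M P ι α : Type*} [CommRing R] [AddCommGroup M] [Module R M] [AddCommGroup P]
  [Module R P] {g : M [⋀^ι]→ₗ[R] P} {W : Submodule R P} {r : α → M}

theorem alternatingMap_mem_of_not_injective {t : ι → α} (ht : ¬ Function.Injective t) :
    g (r ∘ t) ∈ W := by
  rw [g.map_eq_zero_of_not_injective _ fun h ↦ ht h.of_comp]
  exact W.zero_mem

theorem alternatingMap_mem_of_range_subset [Finite ι] {t t' : ι → α}
    (hsub : Set.range t ⊆ Set.range t') (h : g (r ∘ t') ∈ W) : g (r ∘ t) ∈ W := by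
  classical
  have := Fintype.ofFinite ι
  obtain ⟨σ, rfl⟩ := Set.range_subset_range_iff_exists_comp.mp hsub
  by_cases hσ : Function.Injective σ
  · have hperm : g (r ∘ t' ∘ σ) = _ :=
      g.map_perm (r ∘ t') (.ofBijective σ (Finite.injective_iff_bijective.mp hσ))
    rw [hperm]
    exact W.smul_of_tower_mem _ h
  · exact alternatingMap_mem_of_not_injective fun ht ↦ hσ ht.of_comp

theorem StarGenerated.alternatingMap_mem [DecidableEq α] {N : ℕ} {G : Set (Finset α)}
    {S : Finset α} (hS : StarGenerated N G S)
    (hr : ∀ T : Finset α, N ≤ #T → span R (r '' T) = ⊤)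
    (hG : ∀ S ∈ G, ∀ t : ι → α, Set.range t = S → g (r ∘ t) ∈ W) {t : ι → α}
    (ht : Set.range t = S) : g (r ∘ t) ∈ W := by
  classical
  induction hS generalizing t with
  | mem hS => exact hG _ hS t ht
  | @star I Z a haI hZI hN _ ih =>
    by_cases hinj : Function.Injective t
    swap
    · exact alternatingMap_mem_of_not_injective hinj
    obtain ⟨i, rfl⟩ : a ∈ Set.range t := by simp [ht]
    have hrange (v : α) : Set.range (Function.update t i v) = (insert v I : Finset α) := by
      rw [range_update_eq_insert hinj, ht, coe_insert, coe_insert,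
        Set.insert_sdiff_self_of_notMem (mod_cast haI)]
    let L : M →ₗ[R] P := g.toMultilinearMap.toLinearMap (r ∘ t) i
    have hL (v : α) : L (r v) = g (r ∘ Function.update t i v) :=
      congrArg g (Function.comp_update r t i v).symm
    -- Replacing `t i` by an element of `I` repeats a vector, and by an element of `Z` gives a leaf.
    have hspan : span R (r '' ↑(Z ∪ I)) ≤ W.comap L := by
      rw [span_le]
      rintro _ ⟨v, hv, rfl⟩
      rw [SetLike.mem_coe, mem_comap, hL]
      rcases mem_union.mp hv with hvZ | hvI
      · exact ih v hvZ (hrange v)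
      · obtain ⟨j, rfl⟩ : v ∈ Set.range t := by simp [ht, hvI]
        have hji : j ≠ i := by rintro rfl; exact haI hvI
        exact alternatingMap_mem_of_not_injective fun h ↦ hji (h (by simp [hji]))
    rw [hr _ (by rwa [card_union_of_disjoint hZI])] at hspan
    simpa [hL] using hspan (mem_top (x := r (t i)))

theorem choose_finrank_le_card_of_starGenerated [DecidableEq α] {K E : Type*} [Field K]
    [AddCommGroup E] [Module K E] [FiniteDimensional K E] {N s : ℕ} {r : α → E}
    (hr : ∀ T : Finset α, N ≤ #T → span K (r '' T) = ⊤) {V : Finset α} (hN : N ≤ #V)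
    {G : Finset (Finset α)} (hG : ∀ S ⊆ V, #S = s → StarGenerated N G S) :
    (finrank K E).choose s ≤ #G := by
  classical
  let g : E [⋀^Fin s]→ₗ[K] ⋀[K]^s E := exteriorPower.ιMulti K s
  have hrep (S : Finset α) : ∃ y, ∀ t : Fin s → α, Set.range t = S → g (r ∘ t) ∈ span K {y} := by
    by_cases h : ∃ t : Fin s → α, Set.range t = S
    · obtain ⟨t, ht⟩ := h
      exact ⟨_, fun t' ht' ↦ alternatingMap_mem_of_range_subset (ht'.trans ht.symm).le
        (mem_span_singleton_self _)⟩
    · exact ⟨0, fun t ht ↦ absurd ⟨t, ht⟩ h⟩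
  choose y hy using hrep
  have hspan : span K (Set.range fun S : G ↦ y S) = ⊤ := by
    rw [eq_top_iff, ← exteriorPower.ιMulti_span_of_span K s E (hr V hN), span_le]
    rintro _ ⟨_, ha, rfl⟩
    obtain ⟨t, htV, rfl⟩ : ∃ t : Fin s → α, (∀ i, t i ∈ V) ∧ r ∘ t = _ := by
      choose t ht hrt using Set.range_subset_iff.mp ha
      exact ⟨t, ht, funext hrt⟩
    by_cases hinj : Function.Injective t
    swap
    · exact alternatingMap_mem_of_not_injective hinj
    refine (hG (univ.image t) ?_ ?_).alternatingMap_mem hr (fun S hS t ht ↦ ?_) (by simp)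
    · exact image_subset_iff.mpr fun i _ ↦ htV i
    · simp [card_image_of_injective _ hinj]
    · exact span_mono (by simpa using ⟨S, hS, rfl⟩) (hy S t ht)
  calc (finrank K E).choose s = finrank K (⋀[K]^s E) := (exteriorPower.finrank_eq K s).symm
    _ = (Set.range fun S : G ↦ y S).finrank K := by rw [Set.finrank, hspan, finrank_top]
    _ ≤ #G := by simpa using finrank_range_le_card (R := K) fun S : G ↦ y S

theorem span_momentCurve_eq_top {K : Type*} [Field K] {N : ℕ} {x : α → K}
    (hx : Function.Injective x) {T : Finset α} (hT : N ≤ #T) :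
    span K ((fun v (j : Fin N) ↦ x v ^ (j : ℕ)) '' T) = ⊤ := by
  obtain ⟨T', hT', hcard⟩ := exists_subset_card_eq hT
  let y : Fin N → α := fun j ↦ (T'.equivFinOfCardEq hcard).symm j
  have hy : Function.Injective y := Subtype.val_injective.comp (Equiv.injective _)
  have hindep : LinearIndependent K fun (i j : Fin N) ↦ x (y i) ^ (j : ℕ) :=
    Matrix.linearIndependent_rows_of_det_ne_zero (A := Matrix.vandermonde (x ∘ y))
      (Matrix.det_vandermonde_ne_zero_iff.mpr (hx.comp hy))
  rw [eq_top_iff, ← hindep.span_eq_top_of_card_eq_finrank' (by simp)]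
  refine span_mono ?_
  rintro _ ⟨i, rfl⟩
  exact Set.mem_image_of_mem _ (hT' (Subtype.coe_prop _))

theorem exists_field_injective.{u} (α : Type u) :
    ∃ (K : Type u) (_ : Field K) (x : α → K), Function.Injective x :=
  ⟨FractionRing (MvPolynomial α ℚ), inferInstance, _,
    (IsFractionRing.injective (MvPolynomial α ℚ) _).comp MvPolynomial.X_injective⟩

theorem choose_le_card_of_starGenerated [DecidableEq α] {N s : ℕ} {V : Finset α} (hN : N ≤ #V)
    {G : Finset (Finset α)} (hG : ∀ S ⊆ V, #S = s → StarGenerated N G S) : N.choose s ≤ #G := by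
  obtain ⟨K, _, x, hx⟩ := exists_field_injective α
  simpa using choose_finrank_le_card_of_starGenerated
    (fun T hT ↦ span_momentCurve_eq_top hx hT) hN hG

end WeakSaturation

section ConvexSets

theorem strictConvexOn_lt_of_isMinOn {𝕜 E β : Type*} [Field 𝕜] [LinearOrder 𝕜]
    [IsStrictOrderedRing 𝕜] [AddCommMonoid E] [SMul 𝕜 E] [AddCommMonoid β] [LinearOrder β]
    [IsOrderedAddMonoid β] [Module 𝕜 β] [PosSMulMono 𝕜 β] {f : E → β} {s : Set E} {x y : E}
    (hf : StrictConvexOn 𝕜 s f) (hmin : IsMinOn f s x) (hx : x ∈ s) (hy : y ∈ s) (hxy : x ≠ y) :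
    f x < f y := by
  by_contra! hyx
  exact hxy (hf.eq_of_isMinOn hmin (fun z hz ↦ hyx.trans (hmin hz)) hx hy)

theorem exists_isMinOn_biInter_erase {ι 𝕜 E β : Type*} [DecidableEq ι] [Field 𝕜] [LinearOrder 𝕜]
    [IsStrictOrderedRing 𝕜] [AddCommGroup E] [Module 𝕜 E] [FiniteDimensional 𝕜 E] [LinearOrder β]
    {f : E → β} (hf : QuasiconvexOn 𝕜 Set.univ f) {B : ι → Set E} {S : Finset ι}
    (hB : ∀ v ∈ S, Convex 𝕜 (B v)) (hS : finrank 𝕜 E < #S) {p : E} (hp : p ∈ ⋂ v ∈ S, B v)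
    (hmin : IsMinOn f (⋂ v ∈ S, B v) p) : ∃ a ∈ S, IsMinOn f (⋂ v ∈ S.erase a, B v) p := by
  -- Otherwise Helly's theorem applies to the sets `B v` and the sublevel set `{x | f x < f p}`.
  by_contra! hlower
  simp only [isMinOn_iff, not_forall, not_le, exists_prop] at hlower
  let C : Option ι → Set E := fun o ↦ o.elim {x | f x < f p} B
  suffices (⋂ o ∈ insertNone S, C o).Nonempty by
    obtain ⟨x, hx⟩ := this
    simp only [Set.mem_iInter, forall_mem_insertNone] at hx
    exact (hmin (Set.mem_iInter₂.mpr hx.2)).not_gt hx.1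
  refine Convex.helly_theorem (𝕜 := 𝕜) (by rw [card_insertNone]; lia) ?_ fun J hJS hJ ↦ ?_
  · rw [forall_mem_insertNone]
    exact ⟨by simpa [C] using hf.convex_lt (f p), hB⟩
  by_cases hnone : none ∈ J
  · obtain ⟨a, ha, haJ⟩ : ∃ a ∈ S, some a ∉ J := by
      by_contra! hall
      have hle := card_le_card (forall_mem_insertNone.mpr ⟨hnone, hall⟩ : insertNone S ⊆ J)
      rw [card_insertNone] at hle
      lia
    obtain ⟨x, hx, hxp⟩ := hlower a ha
    refine ⟨x, Set.mem_iInter₂.mpr fun o ho ↦ ?_⟩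
    cases o with
    | none => exact hxp
    | some v =>
      have hva : v ≠ a := by rintro rfl; exact haJ ho
      exact Set.mem_iInter₂.mp hx v (mem_erase.mpr ⟨hva, some_mem_insertNone.mp (hJS ho)⟩)
  · refine ⟨p, Set.mem_iInter₂.mpr fun o ho ↦ ?_⟩
    cases o with
    | none => exact absurd ho hnone
    | some v => exact Set.mem_iInter₂.mp hp v (some_mem_insertNone.mp (hJS ho))

variable {ι E : Type*}

open scoped Classical in
/-- The faces with `s` vertices of the nerve of the family `A` indexed by `V`; their dimension in
the nerve is `s - 1`. -/
noncomputable def nerveFaces (A : ι → Set E) (V : Finset ι) (s : ℕ) : Finset (Finset ι) :=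
  {S ∈ V.powersetCard s | (⋂ v ∈ S, A v).Nonempty}

theorem mem_nerveFaces {A : ι → Set E} {V S : Finset ι} {s : ℕ} :
    S ∈ nerveFaces A V s ↔ (S ⊆ V ∧ #S = s) ∧ (⋂ v ∈ S, A v).Nonempty := by
  simp [nerveFaces]

open scoped Classical in
theorem starGenerated_of_isMinOn {𝕜 β : Type*} [DecidableEq ι] [Field 𝕜] [LinearOrder 𝕜]
    [IsStrictOrderedRing 𝕜] [AddCommGroup E] [Module 𝕜 E] [FiniteDimensional 𝕜 E] [AddCommMonoid β]
    [LinearOrder β] [IsOrderedAddMonoid β] [Module 𝕜 β] [PosSMulStrictMono 𝕜 β] {f : E → β}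
    (hf : StrictConvexOn 𝕜 Set.univ f) {B : ι → Set E} {V : Finset ι} (hB : ∀ v ∈ V, Convex 𝕜 (B v))
    (hmin : ∀ S ∈ nerveFaces B V (finrank 𝕜 E + 1),
      ∃ p ∈ ⋂ v ∈ S, B v, IsMinOn f (⋂ v ∈ S, B v) p)
    {N : ℕ} (hN : ∀ p, N ≤ #{v ∈ V | p ∉ B v} + finrank 𝕜 E) {S : Finset ι}
    (hSV : S ⊆ V) (hS : #S = finrank 𝕜 E + 1) :
    StarGenerated N (V.powersetCard (finrank 𝕜 E + 1) \ nerveFaces B V (finrank 𝕜 E + 1) :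
      Finset (Finset ι)) S := by
  set F := nerveFaces B V (finrank 𝕜 E + 1)
  have mem_or {T : Finset ι} (hTV : T ⊆ V) (hT : #T = finrank 𝕜 E + 1) :
      T ∈ V.powersetCard (finrank 𝕜 E + 1) \ F ∨ T ∈ F := by
    simp [hTV, hT, em']
  choose! p hp hpmin using hmin
  refine (mem_or hSV hS).elim .mem (starGenerated_of_forall_exists_star (f := f ∘ p) ?_)
  intro S hSF
  obtain ⟨⟨hSV, hS⟩, -⟩ := mem_nerveFaces.mp hSF
  obtain ⟨a, haS, hamin⟩ := exists_isMinOn_biInter_erase hf.convexOn.quasiconvexOn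
    (fun v hv ↦ hB v (hSV hv)) (by lia) (hp S hSF) (hpmin S hSF)
  have hpS (v : ι) (hv : v ∈ S) : p S ∈ B v := Set.mem_iInter₂.mp (hp S hSF) v hv
  have hcard : #(S.erase a) = finrank 𝕜 E := by rw [card_erase_of_mem haS, hS]; rfl
  refine ⟨a, haS, {v ∈ V | p S ∉ B v}, ?_, hcard ▸ hN _, fun v hv ↦ ?_⟩
  · exact disjoint_left.mpr fun v hv hvS ↦ (mem_filter.mp hv).2 (hpS v (mem_of_mem_erase hvS))
  obtain ⟨hvV, hvp⟩ := mem_filter.mp hv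
  set T := insert v (S.erase a)
  have hTV : T ⊆ V := insert_subset hvV ((erase_subset a S).trans hSV)
  have hT : #T = finrank 𝕜 E + 1 := by
    rw [card_insert_of_notMem fun h ↦ hvp (hpS v (mem_of_mem_erase h)), hcard]
  refine (mem_or hTV hT).imp_right fun hTF ↦ ⟨hTF, ?_⟩
  refine strictConvexOn_lt_of_isMinOn (f := f) (hf.subset (Set.subset_univ _) ?_) hamin ?_ ?_ ?_
  · exact convex_iInter₂ fun u hu ↦ hB u (hSV (mem_of_mem_erase hu))
  · exact Set.mem_iInter₂.mpr fun u hu ↦ hpS u (mem_of_mem_erase hu)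
  · exact Set.biInter_mono (subset_insert v _) (fun _ _ ↦ subset_rfl) (hp T hTF)
  · intro hpT
    exact hvp (hpT ▸ Set.mem_iInter₂.mp (hp T hTF) v (mem_insert_self _ _))

theorem strictConvexOn_norm_sq [NormedAddCommGroup E] [InnerProductSpace ℝ E] :
    StrictConvexOn ℝ Set.univ fun x : E ↦ ‖x‖ ^ 2 :=
  StrongConvexOn.strictConvexOn (m := 2)
    (strongConvexOn_iff_convex.mpr (by simpa using convexOn_const 0 convex_univ)) two_pos

theorem exists_isCompact_convex_subfamily [AddCommGroup E] [Module ℝ E] [TopologicalSpace E]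
    [IsTopologicalAddGroup E] [ContinuousSMul ℝ E] {A : ι → Set E} {V : Finset ι}
    (hA : ∀ v ∈ V, Convex ℝ (A v)) :
    ∃ B : ι → Set E, (∀ v, Convex ℝ (B v)) ∧ (∀ v, IsCompact (B v)) ∧ (∀ v ∈ V, B v ⊆ A v) ∧
      ∀ s, nerveFaces A V s ⊆ nerveFaces B V s := by
  have hwitness (S : Finset ι) : ∃ x, (⋂ v ∈ S, A v).Nonempty → x ∈ ⋂ v ∈ S, A v := by
    by_cases hS : (⋂ v ∈ S, A v).Nonempty
    · exact hS.imp fun _ hx _ ↦ hx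
    · exact ⟨0, fun h ↦ absurd h hS⟩
  choose x hx using hwitness
  -- `B v` is the polytope spanned by a chosen common point of each face of the nerve through `v`.
  let I (v : ι) : Set (Finset ι) := {S | (S ⊆ V ∧ (⋂ v ∈ S, A v).Nonempty) ∧ v ∈ S}
  have hI (v : ι) : (I v).Finite :=
    V.powerset.finite_toSet.subset fun S hS ↦ mem_powerset.mpr hS.1.1
  refine ⟨fun v ↦ convexHull ℝ (x '' I v), fun v ↦ convex_convexHull ℝ _,
    fun v ↦ ((hI v).image x).isCompact_convexHull (𝕜 := ℝ), fun v hv ↦ convexHull_min ?_ (hA v hv),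
    fun s S hS ↦ ?_⟩
  · rintro _ ⟨S, ⟨⟨-, hS⟩, hvS⟩, rfl⟩
    exact Set.mem_iInter₂.mp (hx S hS) v hvS
  · rw [mem_nerveFaces] at hS ⊢
    exact ⟨hS.1, x S, Set.mem_iInter₂.mpr fun v hv ↦
      subset_convexHull ℝ _ ⟨S, ⟨⟨hS.1.1, hS.2⟩, hv⟩, rfl⟩⟩

open scoped Classical in
theorem choose_add_card_nerveFaces_le_of_innerProductSpace [NormedAddCommGroup E]
    [InnerProductSpace ℝ E] [FiniteDimensional ℝ E] {A : ι → Set E} {V : Finset ι}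
    (hA : ∀ v ∈ V, Convex ℝ (A v)) {N : ℕ} (hNV : N ≤ #V)
    (hN : ∀ p, N ≤ #{v ∈ V | p ∉ A v} + finrank ℝ E) :
    N.choose (finrank ℝ E + 1) + #(nerveFaces A V (finrank ℝ E + 1)) ≤
      (#V).choose (finrank ℝ E + 1) := by
  obtain ⟨B, hB, hBcompact, hBA, hnerve⟩ := exists_isCompact_convex_subfamily hA
  have hmin : ∀ S ∈ nerveFaces B V (finrank ℝ E + 1),
      ∃ p ∈ ⋂ v ∈ S, B v, IsMinOn (‖·‖ ^ 2) (⋂ v ∈ S, B v) p := by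
    intro S hS
    obtain ⟨⟨-, hcard⟩, hne⟩ := mem_nerveFaces.mp hS
    obtain ⟨v, hv⟩ := card_pos.mp (by lia : 0 < #S)
    have hclosed : IsClosed (⋂ v ∈ S, B v) := isClosed_biInter fun v _ ↦ (hBcompact v).isClosed
    exact ((hBcompact v).of_isClosed_subset hclosed (Set.biInter_subset_of_mem hv)).exists_isMinOn
      hne (by fun_prop)
  have hNB (p : E) : N ≤ #{v ∈ V | p ∉ B v} + finrank ℝ E :=
    (hN p).trans <| Nat.add_le_add_right
      (card_le_card fun v hv ↦ by
        simp only [mem_filter] at hv ⊢; exact ⟨hv.1, mt (@hBA v hv.1 p) hv.2⟩) _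
  have hcount := choose_le_card_of_starGenerated hNV fun S hSV hS ↦
    starGenerated_of_isMinOn strictConvexOn_norm_sq (fun v _ ↦ hB v) hmin hNB hSV hS
  have hsub : nerveFaces B V (finrank ℝ E + 1) ⊆ V.powersetCard (finrank ℝ E + 1) :=
    fun S hS ↦ mem_powersetCard.mpr (mem_nerveFaces.mp hS).1
  have hmono := card_le_card (hnerve (finrank ℝ E + 1))
  have hsdiff := card_sdiff_add_card_eq_card hsub
  rw [card_powersetCard] at hsdiff
  lia

open scoped Classical in
theorem choose_add_card_nerveFaces_le [AddCommGroup E] [Module ℝ E] [FiniteDimensional ℝ E]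
    {A : ι → Set E} {V : Finset ι} (hA : ∀ v ∈ V, Convex ℝ (A v)) {N : ℕ} (hNV : N ≤ #V)
    (hN : ∀ p, N ≤ #{v ∈ V | p ∉ A v} + finrank ℝ E) :
    N.choose (finrank ℝ E + 1) + #(nerveFaces A V (finrank ℝ E + 1)) ≤
      (#V).choose (finrank ℝ E + 1) := by
  let e : EuclideanSpace ℝ (Fin (finrank ℝ E)) ≃ₗ[ℝ] E := LinearEquiv.ofFinrankEq _ _ (by simp)
  have hnerve (s : ℕ) : nerveFaces (fun v ↦ e ⁻¹' A v) V s = nerveFaces A V s := by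
    ext S
    simp_rw [mem_nerveFaces, ← Set.preimage_iInter₂, e.surjective.nonempty_preimage]
  have hbound := choose_add_card_nerveFaces_le_of_innerProductSpace
    (fun v hv ↦ (hA v hv).linear_preimage e.toLinearMap) hNV (fun p ↦ by simpa using hN (e p))
  simpa [hnerve] using hbound

end ConvexSets

section Agreeable

variable {ι E : Type*}

/-- The `(k, m)`-agreeability of a society with voters `V` and approval sets `A`, apart from the
requirement `m ≤ #V`. -/
def IsAgreeable (k m : ℕ) (V : Finset ι) (A : ι → Set E) : Prop :=
  ∀ W ⊆ V, #W = m → ∃ K ⊆ W, #K = k ∧ (⋂ v ∈ K, A v).Nonempty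

theorem choose_mul_le_card_mul_choose [DecidableEq ι] {V : Finset ι} {s m c : ℕ} (hsm : s ≤ m)
    (hmV : m ≤ #V) {F : Finset (Finset ι)} (hF : F ⊆ V.powersetCard s)
    (h : ∀ W ∈ V.powersetCard m, c ≤ #{S ∈ F | S ⊆ W}) :
    (#V).choose s * c ≤ #F * m.choose s := by
  have hincidence : (#V).choose m * c ≤ #F * (#V - s).choose (m - s) := by
    rw [← card_powersetCard]
    refine card_mul_le_card_mul (fun W S : Finset ι ↦ S ⊆ W) h fun S hS ↦ ?_
    obtain ⟨hSV, rfl⟩ := mem_powersetCard.mp (hF hS)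
    exact (card_filter_powersetCard_subset S V m hSV hsm).le
  refine Nat.le_of_mul_le_mul_right ?_ (Nat.choose_pos (by lia) : 0 < (#V - s).choose (m - s))
  calc (#V).choose s * c * (#V - s).choose (m - s)
      = (#V).choose m * c * m.choose s := by
        rw [mul_right_comm, ← Nat.choose_mul hsm, mul_right_comm]
    _ ≤ #F * (#V - s).choose (m - s) * m.choose s := by gcongr
    _ = #F * m.choose s * (#V - s).choose (m - s) := mul_right_comm _ _ _

theorem IsAgreeable.choose_mul_choose_le {k m s : ℕ} {V : Finset ι} {A : ι → Set E}
    (h : IsAgreeable k m V A) (hsm : s ≤ m) (hmV : m ≤ #V) :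
    (#V).choose s * k.choose s ≤ #(nerveFaces A V s) * m.choose s := by
  classical
  refine choose_mul_le_card_mul_choose hsm hmV
    (fun S hS ↦ mem_powersetCard.mpr (mem_nerveFaces.mp hS).1) fun W hW ↦ ?_
  obtain ⟨hWV, hWm⟩ := mem_powersetCard.mp hW
  obtain ⟨K, hKW, rfl, hK⟩ := h W hWV hWm
  rw [← card_powersetCard]
  refine card_le_card fun S hS ↦ ?_
  obtain ⟨hSK, hSs⟩ := mem_powersetCard.mp hS
  have hS : (⋂ v ∈ S, A v).Nonempty := hK.mono (Set.biInter_mono hSK fun _ _ ↦ subset_rfl)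
  exact mem_filter.mpr ⟨mem_nerveFaces.mpr ⟨⟨(hSK.trans hKW).trans hWV, hSs⟩, hS⟩, hSK.trans hKW⟩

open scoped Classical in
theorem IsAgreeable.exists_le_card {k m : ℕ} {V : Finset ι} {A : ι → Set E}
    (h : IsAgreeable k m V A) (hmV : m ≤ #V) : ∃ p, k ≤ #{v ∈ V | p ∈ A v} := by
  obtain ⟨W, hWV, hW⟩ := exists_subset_card_eq hmV
  obtain ⟨K, hKW, rfl, p, hp⟩ := h W hWV hW
  exact ⟨p, card_le_card fun v hv ↦ mem_filter.mpr ⟨hWV (hKW hv), Set.mem_iInter₂.mp hp v hv⟩⟩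

theorem le_rpow_mul_of_choose_le {x n d : ℕ} {β : ℝ} (hβ : 0 ≤ β)
    (h : ((x + d).choose (d + 1) : ℝ) ≤ β * n.choose (d + 1)) :
    (x : ℝ) ≤ β ^ ((1 : ℝ) / (d + 1)) * n := by
  have hpow : (x : ℝ) ^ (d + 1) ≤ β * (n : ℝ) ^ (d + 1) := by
    have hlower := Nat.pow_le_choose (α := ℝ) (d + 1) (x + d)
    rw [show x + d + 1 - (d + 1) = x by lia] at hlower
    have hupper := mul_le_mul_of_nonneg_left (Nat.choose_le_pow_div (α := ℝ) (d + 1) n) hβ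
    rw [← mul_div_assoc] at hupper
    exact (div_le_div_iff_of_pos_right (by positivity)).mp (hlower.trans (h.trans hupper))
  have hroot : (β ^ ((1 : ℝ) / (d + 1))) ^ (d + 1) = β := by
    rw [one_div]
    exact_mod_cast Real.rpow_inv_natCast_pow hβ d.succ_ne_zero
  rw [← hroot, ← mul_pow] at hpow
  exact le_of_pow_le_pow_left₀ d.succ_ne_zero (by positivity) hpow

variable [AddCommGroup E] [Module ℝ E] [FiniteDimensional ℝ E] {k m : ℕ} {V : Finset ι}
  {A : ι → Set E}

open scoped Classical in
theorem IsAgreeable.choose_le_one_sub_div_mul (h : IsAgreeable k m V A)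
    (hA : ∀ v ∈ V, Convex ℝ (A v)) (hk : finrank ℝ E < k) (hm : finrank ℝ E < m) (hmV : m ≤ #V)
    {x : ℕ} (hx : ∀ p, x ≤ #{v ∈ V | p ∉ A v}) :
    ((x + finrank ℝ E).choose (finrank ℝ E + 1) : ℝ) ≤
      (1 - (k.choose (finrank ℝ E + 1) : ℝ) / m.choose (finrank ℝ E + 1)) *
        (#V).choose (finrank ℝ E + 1) := by
  set d := finrank ℝ E
  have hxV : x + d ≤ #V := by
    obtain ⟨p, hp⟩ := h.exists_le_card hmV
    have hxp := hx p
    have hsplit : #{v ∈ V | p ∈ A v} + #{v ∈ V | p ∉ A v} = #V := card_filter_add_card_filter_not _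
    lia
  have hupper : ((x + d).choose (d + 1) : ℝ) + #(nerveFaces A V (d + 1)) ≤ (#V).choose (d + 1) :=
    mod_cast choose_add_card_nerveFaces_le hA hxV fun p ↦ Nat.add_le_add_right (hx p) d
  have hlower : ((#V).choose (d + 1) : ℝ) * k.choose (d + 1) ≤
      #(nerveFaces A V (d + 1)) * m.choose (d + 1) := mod_cast h.choose_mul_choose_le hm hmV
  have hpos : (0 : ℝ) < m.choose (d + 1) := mod_cast Nat.choose_pos hm
  calc ((x + d).choose (d + 1) : ℝ)
      ≤ (#V).choose (d + 1) - #(nerveFaces A V (d + 1)) := le_sub_iff_add_le.mpr hupper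
    _ ≤ (#V).choose (d + 1) - (#V).choose (d + 1) * k.choose (d + 1) / m.choose (d + 1) :=
      sub_le_sub_left ((div_le_iff₀ hpos).mpr hlower) _
    _ = (1 - (k.choose (d + 1) : ℝ) / m.choose (d + 1)) * (#V).choose (d + 1) := by ring

open scoped Classical in
theorem IsAgreeable.le_rpow_mul_card (h : IsAgreeable k m V A) (hA : ∀ v ∈ V, Convex ℝ (A v))
    (hm : finrank ℝ E < m) (hmV : m ≤ #V) {x : ℕ} (hx : ∀ p, x ≤ #{v ∈ V | p ∉ A v}) :
    (x : ℝ) ≤ (1 - (k.choose (finrank ℝ E + 1) : ℝ) / m.choose (finrank ℝ E + 1)) ^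
      ((1 : ℝ) / (finrank ℝ E + 1)) * #V := by
  obtain hk | hk := le_or_gt k (finrank ℝ E)
  · have hxV : (x : ℝ) ≤ #V := mod_cast (hx 0).trans (card_filter_le V _)
    simpa [Nat.choose_eq_zero_of_lt (Nat.lt_succ_of_le hk)] using hxV
  · have hchoose := h.choose_le_one_sub_div_mul hA hk hm hmV hx
    have hpos : (0 : ℝ) < (#V).choose (finrank ℝ E + 1) :=
      mod_cast Nat.choose_pos (Nat.succ_le_of_lt (hm.trans_le hmV))
    exact le_rpow_mul_of_choose_le
      (nonneg_of_mul_nonneg_left ((Nat.cast_nonneg _).trans hchoose) hpos) hchoose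

theorem agreeable_convex_society_agreement_proportion_general (hm : finrank ℝ E < m)
    (hmV : m ≤ #V) (hA : ∀ v ∈ V, Convex ℝ (A v)) (hagree : IsAgreeable k m V A) :
    ∃ p : E,
      (1 - (1 - (k.choose (finrank ℝ E + 1) : ℝ) / m.choose (finrank ℝ E + 1)) ^
        ((1 : ℝ) / (finrank ℝ E + 1))) * #V ≤ {v ∈ (V : Set ι) | p ∈ A v}.ncard := by
  classical
  let missed (p : E) : ℕ := #{v ∈ V | p ∉ A v}
  let p : E := Function.argmin missed
  have hmissed := hagree.le_rpow_mul_card hA hm hmV fun q ↦ Function.argmin_le missed q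
  have hncard : {v ∈ (V : Set ι) | p ∈ A v}.ncard = #{v ∈ V | p ∈ A v} := by
    simp [← Set.ncard_coe_finset]
  have hsplit : (#{v ∈ V | p ∈ A v} : ℝ) + missed p = #V :=
    mod_cast card_filter_add_card_filter_not _
  refine ⟨p, ?_⟩
  rw [hncard, sub_mul, one_mul]
  linarith

end Agreeable

/-- Let `d ≥ 1`, `k ≥ 2`, `m ≥ k` with `m > d`.  Every `(k,m)`-agreeable
`ℝ^d`-convex society with `n` voters has a point contained in at least
`(1 - (1 - C(k,d+1)/C(m,d+1))^(1/(d+1))) * n` of the approval sets. -/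
theorem agreeable_convex_society_agreement_proportion
    {ι : Type*} (d k m : ℕ) (hd : 1 ≤ d) (hk : 2 ≤ k) (hkm : k ≤ m) (hmd : d < m)
    (V : Finset ι) (n : ℕ) (hn : V.card = n) (hnm : m ≤ n)
    (A : ι → Set (Fin d → ℝ)) (hconv : ∀ v ∈ V, Convex ℝ (A v))
    (hagree : ∀ W ⊆ V, W.card = m →
      ∃ K ⊆ W, K.card = k ∧ (⋂ v ∈ K, A v).Nonempty) :
    ∃ p : Fin d → ℝ,
      (1 - (1 - (k.choose (d + 1) : ℝ) / (m.choose (d + 1))) ^ ((1 : ℝ) / (d + 1))) * n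
        ≤ {v ∈ (V : Set ι) | p ∈ A v}.ncard := by
  subst hn
  simpa using agreeable_convex_society_agreement_proportion_general (by simpa) hnm hconv hagree
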